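/- Let α, β, γ, w ∈ ℂ with none of α, β, γ a nonpositive integer, and let k ∈ (0,1). Define f̃_{m,n} and c̃_n as in the context, and set d := max{1, |α|, |β|, |γ|}. Then for every n ≥ 0: |c̃_n| ≤ exp( π²·|w| / (6·(1−k²)) ) · (d)_n² / (n!·|(γ)_n|). -/

import Mathlib

/-- The Pochhammer symbol `(x)_n = x(x+1)⋯(x+n-1)`. -/
noncomputable def poch (x : ℂ) (n : ℕ) : ℂ := ∏ i ∈ Finset.range n, (x + (i : ℂ))

/-- The index set of tuples `(ℓ_1, j_1, …, ℓ_m, j_m)` with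
`0 ≤ ℓ_1 ≤ j_1 < ℓ_2 ≤ j_2 < ⋯ < ℓ_m ≤ j_m < n`, encoded as pairs of functions
`(ℓ, j) : (Fin m → Fin n) × (Fin m → Fin n)`. -/
def heunIdx (m n : ℕ) : Finset ((Fin m → Fin n) × (Fin m → Fin n)) :=
  Finset.univ.filter fun p =>
    (∀ s : Fin m, (p.1 s : ℕ) ≤ (p.2 s : ℕ)) ∧
    (∀ s t : Fin m, (s : ℕ) + 1 = (t : ℕ) → (p.2 s : ℕ) < (p.1 t : ℕ))

/-- The coefficients `f̃_{m,n}` for the case `δ = β + 1`: `f̃_{0,n} = 1`; for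
`1 ≤ m ≤ n`, `f̃_{m,n} = (-1)^m Σ ∏_{s=1}^m [j_s!(α)_{j_s}(β)_{ℓ_s}(γ)_{ℓ_s} /
(ℓ_s!(α)_{ℓ_s}(β)_{j_s+1}(γ)_{j_s+1})] k^{2(j_s-ℓ_s)}`, the sum running over
`heunIdx m n`; and `f̃_{m,n} = 0` for `m < 0` or `m > n`. -/
noncomputable def heunft (k : ℝ) (α β γ : ℂ) (m : ℤ) (n : ℕ) : ℂ :=
  if m = 0 then 1
  else if m < 0 ∨ (n : ℤ) < m then 0
  else (-1 : ℂ) ^ m.toNat *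
    ∑ p ∈ heunIdx m.toNat n, ∏ s : Fin m.toNat,
      ((Nat.factorial (p.2 s : ℕ) : ℂ) * poch α (p.2 s : ℕ) * poch β (p.1 s : ℕ) *
          poch γ (p.1 s : ℕ)) /
        ((Nat.factorial (p.1 s : ℕ) : ℂ) * poch α (p.1 s : ℕ) * poch β ((p.2 s : ℕ) + 1) *
          poch γ ((p.2 s : ℕ) + 1)) *
      (k : ℂ) ^ ((2 : ℤ) * (((p.2 s : ℕ) : ℤ) - ((p.1 s : ℕ) : ℤ)))

/-- The Taylor coefficients `c̃_n = ((β)_n / n!) Σ_{m=0}^n f̃_{m,n} wᵐ` of the local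
Heun solution for `δ = β + 1`. -/
noncomputable def heunct (k : ℝ) (α β γ w : ℂ) (n : ℕ) : ℂ :=
  poch β n / (Nat.factorial n : ℂ) *
    ∑ m ∈ Finset.range (n + 1), heunft k α β γ (m : ℤ) n * w ^ m

/-- The real Pochhammer symbol `(x)_n = x(x+1)⋯(x+n-1)`. -/
noncomputable def pochR (x : ℝ) (n : ℕ) : ℝ := ∏ i ∈ Finset.range n, (x + (i : ℝ))

/-!
Normalise by `B n = |(β)_n (γ)_n| / (d)_n²` and `A n = n! |(α)_n| / (d)_n²`, both of which decrease
in `n` because each of `1, α, β, γ` is bounded by `d`. A factor of `f̃_{m,n}` then has modulus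
`(A j / A l) (B l / B (j + 1)) k^{2(j - l)} / (d + j)²`. Here `A j / A l ≤ 1`, and since
`j_s < l_{s+1}` the product of the quotients of `B` is at most `1 / B n`. What remains is
`∏ k^{2(j_s - l_s)} / (j_s + 1)²`, summed over chains of pairs `(l_s, j_s)`. Such chains are
strictly increasing, so permuting their entries gives `m!` distinct terms in the expansion of the
`m`-th power of the sum over single pairs, and that sum is at most `ζ(2) / (1 - k²)`. Thus
`B n |f̃_{m,n}| |w|^m` is bounded by the `m`-th term of an exponential series.
-/

section StrictMono

variable {X R : Type*} [Preorder X] {m : ℕ}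

lemma injOn_comp_perm_of_strictMono :
    Set.InjOn (fun q : Equiv.Perm (Fin m) × (Fin m → X) => q.2 ∘ q.1) {q | StrictMono q.2} := by
  rintro ⟨σ, f⟩ (hf : StrictMono f) ⟨τ, g⟩ (hg : StrictMono g) (h : f ∘ σ = g ∘ τ)
  obtain rfl : f = g := (hf.range_inj hg).1 <| by
    rw [← EquivLike.range_comp f σ, h, EquivLike.range_comp]
  rw [Equiv.ext fun s => hf.injective (congrFun h s)]

lemma factorial_mul_sum_prod_le_sum_pow [CommSemiring R] [PartialOrder R] [IsOrderedRing R]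
    {T : Finset X} {a : X → R} (ha : ∀ x ∈ T, 0 ≤ a x) {F : Finset (Fin m → X)}
    (hmono : ∀ f ∈ F, StrictMono f) (hT : ∀ f ∈ F, ∀ s, f s ∈ T) :
    (m.factorial : R) * ∑ f ∈ F, ∏ s, a (f s) ≤ (∑ x ∈ T, a x) ^ m := by
  classical
  let P : Finset (Equiv.Perm (Fin m) × (Fin m → X)) := Finset.univ ×ˢ F
  have hPF : ∀ q ∈ P, q.2 ∈ F := fun q hq => (Finset.mem_product.1 hq).2
  have hinj : Set.InjOn (fun q : Equiv.Perm (Fin m) × (Fin m → X) => q.2 ∘ q.1) P :=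
    injOn_comp_perm_of_strictMono.mono fun q hq => hmono q.2 (hPF q hq)
  calc (m.factorial : R) * ∑ f ∈ F, ∏ s, a (f s)
      = ∑ _σ : Equiv.Perm (Fin m), ∑ f ∈ F, ∏ s, a (f s) := by simp [Fintype.card_perm]
    _ = ∑ q ∈ P, ∏ s, a ((q.2 ∘ q.1) s) := by
        rw [Finset.sum_product]
        exact Finset.sum_congr rfl fun σ _ => Finset.sum_congr rfl fun f _ =>
          (Equiv.prod_comp σ fun s => a (f s)).symm
    _ = ∑ f ∈ P.image fun q => q.2 ∘ q.1, ∏ s, a (f s) :=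
        (Finset.sum_image (f := fun f => ∏ s, a (f s)) hinj).symm
    _ ≤ ∑ f ∈ Fintype.piFinset fun _ : Fin m => T, ∏ s, a (f s) := by
        refine Finset.sum_le_sum_of_subset_of_nonneg (fun f hf => ?_) fun f hf _ =>
          Finset.prod_nonneg fun s _ => ha _ (Fintype.mem_piFinset.1 hf s)
        obtain ⟨q, hq, rfl⟩ := Finset.mem_image.1 hf
        exact Fintype.mem_piFinset.2 fun s => hT q.2 (hPF q hq) _
    _ = (∑ x ∈ T, a x) ^ m := (Finset.sum_pow' T a m).symm

end StrictMono

lemma mul_prod_div_le_of_antitone {𝕜 : Type*} [Field 𝕜] [LinearOrder 𝕜] [IsStrictOrderedRing 𝕜]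
    {B : ℕ → 𝕜} (hanti : Antitone B) (hnonneg : ∀ n, 0 ≤ B n)
    {m N : ℕ} {l j : Fin m → ℕ} (hjl : ∀ s t, s < t → j s < l t) (hjN : ∀ s, j s < N) :
    B N * ∏ s, B (l s) / B (j s + 1) ≤ B 0 := by
  induction m generalizing N with
  | zero => simpa using hanti N.zero_le
  | succ m ih =>
    have hinit : B (l (Fin.last m)) * ∏ s : Fin m, B (l s.castSucc) / B (j s.castSucc + 1) ≤ B 0 :=
      ih (fun s t hst => hjl _ _ (Fin.castSucc_lt_castSucc_iff.2 hst))
        fun s => hjl _ _ s.castSucc_lt_last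
    have hlast : B N / B (j (Fin.last m) + 1) ≤ 1 :=
      div_le_one_of_le₀ (hanti (hjN _)) (hnonneg _)
    calc B N * ∏ s, B (l s) / B (j s + 1)
        = B N / B (j (Fin.last m) + 1) *
          (B (l (Fin.last m)) * ∏ s : Fin m, B (l s.castSucc) / B (j s.castSucc + 1)) := by
          rw [Fin.prod_univ_castSucc]; ring
      _ ≤ 1 * B 0 := mul_le_mul hlast hinit
          (mul_nonneg (hnonneg _) (Finset.prod_nonneg fun s _ =>
            div_nonneg (hnonneg _) (hnonneg _))) zero_le_one
      _ = B 0 := one_mul _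

lemma sum_range_one_div_add_one_sq_le (n : ℕ) :
    ∑ i ∈ Finset.range n, 1 / ((i : ℝ) + 1) ^ 2 ≤ Real.pi ^ 2 / 6 := by
  have hzeta : HasSum (fun i : ℕ => 1 / ((i : ℝ) + 1) ^ 2) (Real.pi ^ 2 / 6) := by
    simpa using (hasSum_nat_add_iff' 1).2 hasSum_zeta_two
  exact sum_le_hasSum _ (fun i _ => by positivity) hzeta

lemma geom_sum_le_inv_one_sub {q : ℝ} (h0 : 0 ≤ q) (h1 : q < 1) (n : ℕ) :
    ∑ i ∈ Finset.range n, q ^ i ≤ (1 - q)⁻¹ :=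
  sum_le_hasSum _ (fun i _ => pow_nonneg h0 i) (hasSum_geometric_of_lt_one h0 h1)

lemma sum_pow_sub_div_sq_le {q : ℝ} (h0 : 0 ≤ q) (h1 : q < 1) (n : ℕ) :
    ∑ x : Fin n × Fin n with x.1 ≤ x.2, q ^ ((x.2 : ℕ) - x.1) / ((x.2 : ℝ) + 1) ^ 2 ≤
      Real.pi ^ 2 / (6 * (1 - q)) := by
  have hinj : Set.InjOn (fun x : Fin n × Fin n => ((x.2 : ℕ) - x.1, (x.2 : ℕ)))
      ({x | x.1 ≤ x.2} : Finset (Fin n × Fin n)) := by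
    rintro ⟨l, j⟩ hx ⟨l', j'⟩ hx' h
    simp only [Finset.coe_filter, Finset.mem_univ, true_and, Set.mem_ofPred_eq] at hx hx'
    simp only [Prod.mk.injEq, Fin.ext_iff] at h ⊢
    omega
  calc _ = ∑ y ∈ ({x : Fin n × Fin n | x.1 ≤ x.2} : Finset _).image
          fun x : Fin n × Fin n => ((x.2 : ℕ) - x.1, (x.2 : ℕ)),
          q ^ y.1 * (1 / ((y.2 : ℝ) + 1) ^ 2) := by
        rw [Finset.sum_image hinj]
        exact Finset.sum_congr rfl fun x _ => div_eq_mul_one_div _ _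
    _ ≤ ∑ y ∈ Finset.range n ×ˢ Finset.range n, q ^ y.1 * (1 / ((y.2 : ℝ) + 1) ^ 2) := by
        refine Finset.sum_le_sum_of_subset_of_nonneg (Finset.image_subset_iff.2 fun x _ => ?_)
          fun y _ _ => by positivity
        simp only [Finset.mem_product, Finset.mem_range]
        omega
    _ = (∑ i ∈ Finset.range n, q ^ i) * ∑ i ∈ Finset.range n, 1 / ((i : ℝ) + 1) ^ 2 := by
        rw [Finset.sum_product, Finset.sum_mul_sum]
    _ ≤ (1 - q)⁻¹ * (Real.pi ^ 2 / 6) :=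
        mul_le_mul (geom_sum_le_inv_one_sub h0 h1 n) (sum_range_one_div_add_one_sq_le n)
          (Finset.sum_nonneg fun i _ => by positivity) (inv_nonneg.2 (sub_nonneg.2 h1.le))
    _ = Real.pi ^ 2 / (6 * (1 - q)) := by
        rw [inv_mul_eq_div, div_div]

section HeunIdx

variable {m n : ℕ} {p : (Fin m → Fin n) × (Fin m → Fin n)}

lemma heunIdx_fst_le_snd (hp : p ∈ heunIdx m n) (s : Fin m) : p.1 s ≤ p.2 s :=
  (Finset.mem_filter.1 hp).2.1 s

lemma heunIdx_snd_lt_fst (hp : p ∈ heunIdx m n) {s t : Fin m} (hst : s < t) : p.2 s < p.1 t := by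
  obtain ⟨-, hle, hlt⟩ := Finset.mem_filter.1 hp
  obtain ⟨t, ht⟩ := t
  induction t with
  | zero => exact absurd hst (Nat.not_lt_zero _)
  | succ t ih =>
    have hpred : p.2 ⟨t, by omega⟩ < p.1 ⟨t + 1, ht⟩ := hlt _ _ rfl
    rcases (Nat.lt_succ_iff_lt_or_eq.1 hst) with h | h
    · exact ((ih (by omega) h).trans_le (hle _)).trans hpred
    · rwa [show s = ⟨t, by omega⟩ from Fin.ext h]

lemma heunIdx_strictMono (hp : p ∈ heunIdx m n) : StrictMono fun s => (p.1 s, p.2 s) :=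
  fun _ t hst =>
    have hfst := (heunIdx_fst_le_snd hp _).trans_lt (heunIdx_snd_lt_fst hp hst)
    have hsnd := (heunIdx_snd_lt_fst hp hst).trans_le (heunIdx_fst_le_snd hp t)
    Prod.mk_lt_mk.2 (Or.inl ⟨hfst, hsnd.le⟩)

lemma heunIdx_eq_empty (h : n < m) : heunIdx m n = ∅ := by
  refine Finset.eq_empty_of_forall_notMem fun p hp => h.not_ge ?_
  have hmono : StrictMono p.2 := fun _ t hst =>
    (heunIdx_snd_lt_fst hp hst).trans_le (heunIdx_fst_le_snd hp t)
  simpa using Fintype.card_le_of_injective _ hmono.injective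

lemma sum_heunIdx_prod_le {q : ℝ} (h0 : 0 ≤ q) (h1 : q < 1) (m n : ℕ) :
    ∑ p ∈ heunIdx m n, ∏ s, q ^ ((p.2 s : ℕ) - p.1 s) / ((p.2 s : ℝ) + 1) ^ 2 ≤
      (Real.pi ^ 2 / (6 * (1 - q))) ^ m / m.factorial := by
  set T : Finset (Fin n × Fin n) := {x | x.1 ≤ x.2}
  set a : Fin n × Fin n → ℝ := fun x => q ^ ((x.2 : ℕ) - x.1) / ((x.2 : ℝ) + 1) ^ 2
  have ha : ∀ x ∈ T, 0 ≤ a x := fun x _ => by positivity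
  let e := (Equiv.arrowProdEquivProdArrow (Fin m) (fun _ => Fin n) fun _ => Fin n).symm
  have hsum := factorial_mul_sum_prod_le_sum_pow ha (F := (heunIdx m n).map e.toEmbedding)
    (Finset.forall_mem_map.2 fun p hp => heunIdx_strictMono hp)
    (Finset.forall_mem_map.2 fun p hp s =>
      Finset.mem_filter.2 ⟨Finset.mem_univ _, heunIdx_fst_le_snd hp s⟩)
  rw [Finset.sum_map] at hsum
  rw [le_div_iff₀' (by positivity)]
  exact hsum.trans
    (pow_le_pow_left₀ (Finset.sum_nonneg ha) (sum_pow_sub_div_sq_le h0 h1 n) m)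

end HeunIdx

lemma poch_succ (x : ℂ) (n : ℕ) : poch x (n + 1) = poch x n * (x + n) :=
  Finset.prod_range_succ _ n

lemma pochR_succ (x : ℝ) (n : ℕ) : pochR x (n + 1) = pochR x n * (x + n) :=
  Finset.prod_range_succ _ n

lemma poch_one (n : ℕ) : poch 1 n = n.factorial := by
  rw [poch, ← Finset.prod_range_add_one_eq_factorial]
  push_cast
  exact Finset.prod_congr rfl fun i _ => add_comm _ _

lemma poch_ne_zero {x : ℂ} (hx : ∀ j : ℕ, x ≠ -(j : ℂ)) (n : ℕ) : poch x n ≠ 0 :=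
  Finset.prod_ne_zero_iff.2 fun i _ h => hx i (eq_neg_of_add_eq_zero_left h)

lemma pochR_pos {x : ℝ} (hx : 0 < x) (n : ℕ) : 0 < pochR x n :=
  Finset.prod_pos fun i _ => by positivity

/-- The product `|(x)_n (y)_n| / (d)_n²` of two Pochhammer symbols, normalised so that it decreases
in `n` once `d` dominates `|x|` and `|y|`. Factorials enter as `(1)_n`. -/
noncomputable def pochRatio (x y : ℂ) (d : ℝ) (n : ℕ) : ℝ :=
  ‖poch x n‖ * ‖poch y n‖ / pochR d n ^ 2

section PochRatio

variable (x y : ℂ) (d : ℝ)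

lemma pochRatio_zero : pochRatio x y d 0 = 1 := by
  simp [pochRatio, poch, pochR]

lemma pochRatio_succ (n : ℕ) :
    pochRatio x y d (n + 1) = pochRatio x y d n * (‖x + n‖ * ‖y + n‖ / (d + n) ^ 2) := by
  simp only [pochRatio, poch_succ, pochR_succ, norm_mul, mul_pow]
  rw [div_mul_div_comm, mul_mul_mul_comm]

lemma pochRatio_nonneg (n : ℕ) : 0 ≤ pochRatio x y d n := by
  unfold pochRatio
  positivity

variable {x y d}

lemma norm_add_natCast_le (hx : ‖x‖ ≤ d) (n : ℕ) : ‖x + n‖ ≤ d + n :=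
  norm_add_le_of_le hx (Complex.norm_natCast n).le

lemma pochRatio_antitone (hx : ‖x‖ ≤ d) (hy : ‖y‖ ≤ d) : Antitone (pochRatio x y d) := by
  refine antitone_nat_of_succ_le fun n => ?_
  have hfactor : ‖x + n‖ * ‖y + n‖ / (d + n) ^ 2 ≤ 1 := by
    refine div_le_one_of_le₀ ?_ (sq_nonneg _)
    rw [sq]
    exact mul_le_mul (norm_add_natCast_le hx n) (norm_add_natCast_le hy n) (norm_nonneg _)
      ((norm_nonneg _).trans (norm_add_natCast_le hx n))
  rw [pochRatio_succ]
  exact mul_le_of_le_one_right (pochRatio_nonneg x y d n) hfactor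

end PochRatio

/-- The factor that one pair `(ℓ_s, j_s) = (l, j)` contributes to a summand of `f̃_{m,n}`. -/
noncomputable def heunFactor (k : ℝ) (α β γ : ℂ) (l j : ℕ) : ℂ :=
  ((j.factorial : ℂ) * poch α j * poch β l * poch γ l) /
      ((l.factorial : ℂ) * poch α l * poch β (j + 1) * poch γ (j + 1)) *
    (k : ℂ) ^ ((2 : ℤ) * ((j : ℤ) - (l : ℤ)))

section HeunFactor

variable (k : ℝ) (α β γ : ℂ) {d : ℝ} {l j : ℕ}

lemma heunft_natCast (m n : ℕ) :
    heunft k α β γ m n =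
      (-1) ^ m * ∑ p ∈ heunIdx m n, ∏ s, heunFactor k α β γ (p.1 s) (p.2 s) := by
  rcases Nat.eq_zero_or_pos m with rfl | hm
  · simp [heunft, heunIdx]
  rcases lt_or_ge n m with hnm | hmn
  · rw [heunft, if_neg (by omega), if_pos (by omega), heunIdx_eq_empty hnm, Finset.sum_empty,
      mul_zero]
  · rw [heunft, if_neg (by omega), if_neg (by omega)]
    rfl

lemma norm_ofReal_zpow_two_mul_sub (hlj : l ≤ j) :
    ‖(k : ℂ) ^ ((2 : ℤ) * ((j : ℤ) - (l : ℤ)))‖ = (k ^ 2) ^ (j - l) := by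
  rw [← Nat.cast_sub hlj, zpow_mul, zpow_natCast, norm_pow, zpow_ofNat, norm_pow,
    Complex.norm_real, Real.norm_eq_abs, sq_abs]

lemma norm_heunFactor (hd : 0 < d) (hlj : l ≤ j) :
    ‖heunFactor k α β γ l j‖ =
      pochRatio 1 α d j / pochRatio 1 α d l * (pochRatio β γ d l / pochRatio β γ d (j + 1)) *
        ((k ^ 2) ^ (j - l) / (d + j) ^ 2) := by
  have hj := pochR_pos hd j
  have hl := pochR_pos hd l
  have : 0 < d + j := by positivity
  rw [heunFactor, norm_mul, norm_ofReal_zpow_two_mul_sub k hlj, ← poch_one, ← poch_one]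
  simp only [norm_div, norm_mul, pochRatio, pochR_succ]
  field_simp

variable {α}

lemma norm_heunFactor_le (hd : 1 ≤ d) (hα : ‖α‖ ≤ d) (hlj : l ≤ j) :
    ‖heunFactor k α β γ l j‖ ≤
      pochRatio β γ d l / pochRatio β γ d (j + 1) * ((k ^ 2) ^ (j - l) / ((j : ℝ) + 1) ^ 2) := by
  have hratio : pochRatio 1 α d j / pochRatio 1 α d l ≤ 1 :=
    div_le_one_of_le₀ (pochRatio_antitone (by simpa using hd) hα hlj) (pochRatio_nonneg _ _ _ _)
  have hquot : 0 ≤ pochRatio β γ d l / pochRatio β γ d (j + 1) :=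
    div_nonneg (pochRatio_nonneg _ _ _ _) (pochRatio_nonneg _ _ _ _)
  have hdenom : ((j : ℝ) + 1) ^ 2 ≤ (d + j) ^ 2 := by
    rw [add_comm]
    gcongr
  rw [norm_heunFactor k α β γ (zero_lt_one.trans_le hd) hlj]
  gcongr
  exact mul_le_of_le_one_left hquot hratio

end HeunFactor

section HeunCoefficients

variable {k d : ℝ} {α β γ : ℂ}

variable (k) in
lemma pochRatio_mul_norm_prod_heunFactor_le (hd : 1 ≤ d) (hα : ‖α‖ ≤ d) (hβ : ‖β‖ ≤ d)
    (hγ : ‖γ‖ ≤ d) {m n : ℕ} {p : (Fin m → Fin n) × (Fin m → Fin n)} (hp : p ∈ heunIdx m n) :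
    pochRatio β γ d n * ‖∏ s, heunFactor k α β γ (p.1 s) (p.2 s)‖ ≤
      ∏ s, (k ^ 2) ^ ((p.2 s : ℕ) - p.1 s) / ((p.2 s : ℝ) + 1) ^ 2 := by
  set B := pochRatio β γ d
  have htelescope : B n * ∏ s, B (p.1 s) / B (p.2 s + 1) ≤ 1 :=
    (mul_prod_div_le_of_antitone (pochRatio_antitone hβ hγ) (pochRatio_nonneg β γ d)
      (fun _ _ hst => heunIdx_snd_lt_fst hp hst) fun s => (p.2 s).2).trans_eq
      (pochRatio_zero β γ d)
  calc B n * ‖∏ s, heunFactor k α β γ (p.1 s) (p.2 s)‖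
      ≤ B n * ∏ s, (B (p.1 s) / B (p.2 s + 1) *
          ((k ^ 2) ^ ((p.2 s : ℕ) - p.1 s) / ((p.2 s : ℝ) + 1) ^ 2)) := by
        rw [norm_prod]
        exact mul_le_mul_of_nonneg_left
          (Finset.prod_le_prod (fun _ _ => norm_nonneg _) fun s _ =>
            norm_heunFactor_le k β γ hd hα (heunIdx_fst_le_snd hp s))
          (pochRatio_nonneg β γ d n)
    _ = B n * (∏ s, B (p.1 s) / B (p.2 s + 1)) *
          ∏ s, (k ^ 2) ^ ((p.2 s : ℕ) - p.1 s) / ((p.2 s : ℝ) + 1) ^ 2 := by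
        rw [Finset.prod_mul_distrib, mul_assoc]
    _ ≤ ∏ s, (k ^ 2) ^ ((p.2 s : ℕ) - p.1 s) / ((p.2 s : ℝ) + 1) ^ 2 :=
        mul_le_of_le_one_left (Finset.prod_nonneg fun _ _ => by positivity) htelescope

lemma pochRatio_mul_norm_heunft_le (hk : k ^ 2 < 1) (hd : 1 ≤ d) (hα : ‖α‖ ≤ d) (hβ : ‖β‖ ≤ d)
    (hγ : ‖γ‖ ≤ d) (m n : ℕ) :
    pochRatio β γ d n * ‖heunft k α β γ m n‖ ≤
      (Real.pi ^ 2 / (6 * (1 - k ^ 2))) ^ m / m.factorial := by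
  calc pochRatio β γ d n * ‖heunft k α β γ m n‖
      = pochRatio β γ d n * ‖∑ p ∈ heunIdx m n, ∏ s, heunFactor k α β γ (p.1 s) (p.2 s)‖ := by
        rw [heunft_natCast, norm_mul, norm_pow, norm_neg, norm_one, one_pow, one_mul]
    _ ≤ ∑ p ∈ heunIdx m n,
          pochRatio β γ d n * ‖∏ s, heunFactor k α β γ (p.1 s) (p.2 s)‖ := by
        rw [← Finset.mul_sum]
        exact mul_le_mul_of_nonneg_left (norm_sum_le _ _) (pochRatio_nonneg β γ d n)
    _ ≤ ∑ p ∈ heunIdx m n, ∏ s, (k ^ 2) ^ ((p.2 s : ℕ) - p.1 s) / ((p.2 s : ℝ) + 1) ^ 2 :=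
        Finset.sum_le_sum fun p hp => pochRatio_mul_norm_prod_heunFactor_le k hd hα hβ hγ hp
    _ ≤ (Real.pi ^ 2 / (6 * (1 - k ^ 2))) ^ m / m.factorial :=
        sum_heunIdx_prod_le (sq_nonneg k) hk m n

lemma pochRatio_mul_norm_sum_heunft_le (hk : k ^ 2 < 1) (hd : 1 ≤ d) (hα : ‖α‖ ≤ d)
    (hβ : ‖β‖ ≤ d) (hγ : ‖γ‖ ≤ d) (w : ℂ) (n N : ℕ) :
    pochRatio β γ d n * ‖∑ m ∈ Finset.range N, heunft k α β γ (m : ℤ) n * w ^ m‖ ≤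
      Real.exp (Real.pi ^ 2 * ‖w‖ / (6 * (1 - k ^ 2))) := by
  have : 0 < 1 - k ^ 2 := sub_pos.2 hk
  calc pochRatio β γ d n * ‖∑ m ∈ Finset.range N, heunft k α β γ (m : ℤ) n * w ^ m‖
      ≤ pochRatio β γ d n * ∑ m ∈ Finset.range N, ‖heunft k α β γ (m : ℤ) n‖ * ‖w‖ ^ m := by
        gcongr
        · exact pochRatio_nonneg β γ d n
        · exact norm_sum_le_of_le _ fun m _ => by rw [norm_mul, norm_pow]
    _ = ∑ m ∈ Finset.range N, pochRatio β γ d n * ‖heunft k α β γ (m : ℤ) n‖ * ‖w‖ ^ m := by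
        simp only [Finset.mul_sum, mul_assoc]
    _ ≤ ∑ m ∈ Finset.range N,
          (Real.pi ^ 2 / (6 * (1 - k ^ 2))) ^ m / m.factorial * ‖w‖ ^ m := by
        gcongr with m
        exact pochRatio_mul_norm_heunft_le hk hd hα hβ hγ m n
    _ = ∑ m ∈ Finset.range N, (Real.pi ^ 2 * ‖w‖ / (6 * (1 - k ^ 2))) ^ m / m.factorial := by
        simp only [div_mul_eq_mul_div, ← mul_pow]
    _ ≤ Real.exp (Real.pi ^ 2 * ‖w‖ / (6 * (1 - k ^ 2))) :=
        Real.sum_le_exp_of_nonneg (by positivity) N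

end HeunCoefficients

/-- The estimate `|c̃_n| ≤ exp(π²|w|/(6(1-k²))) (d)_n² / (n! |(γ)_n|)` for the Taylor
coefficients of `Hℓ(1/k², -(w-βγ)/k²; α, β, γ, β+1; z)`, where `d = max{1,|α|,|β|,|γ|}`. -/
theorem heun_tilde_coefficients_estimate (k : ℝ) (hk0 : 0 < k) (hk1 : k < 1)
    (α β γ w : ℂ)
    (hα : ∀ j : ℕ, α ≠ -(j : ℂ)) (hβ : ∀ j : ℕ, β ≠ -(j : ℂ))
    (hγ : ∀ j : ℕ, γ ≠ -(j : ℂ))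
    (d : ℝ) (hd : d = max 1 (max ‖α‖ (max ‖β‖ ‖γ‖))) :
    ∀ n : ℕ,
      ‖heunct k α β γ w n‖ ≤
        Real.exp (Real.pi ^ 2 * ‖w‖ / (6 * (1 - k ^ 2))) *
          (pochR d n) ^ 2 / ((Nat.factorial n : ℝ) * ‖poch γ n‖) := by
  intro n
  have hd1 : 1 ≤ d := by simp [hd]
  have hγn : 0 < ‖poch γ n‖ := norm_pos_iff.2 (poch_ne_zero hγ n)
  have hdn : 0 < pochR d n := pochR_pos (zero_lt_one.trans_le hd1) n
  set S : ℂ := ∑ m ∈ Finset.range (n + 1), heunft k α β γ (m : ℤ) n * w ^ m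
  have hS : pochRatio β γ d n * ‖S‖ ≤ Real.exp (Real.pi ^ 2 * ‖w‖ / (6 * (1 - k ^ 2))) :=
    pochRatio_mul_norm_sum_heunft_le (pow_lt_one₀ hk0.le hk1 two_ne_zero) hd1 (by simp [hd])
      (by simp [hd]) (by simp [hd]) w n (n + 1)
  calc ‖heunct k α β γ w n‖
      = ‖poch β n‖ / n.factorial * ‖S‖ := by
        rw [heunct, norm_mul, norm_div, Complex.norm_natCast]
    _ = pochRatio β γ d n * ‖S‖ * pochR d n ^ 2 / (n.factorial * ‖poch γ n‖) := by
        rw [pochRatio]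
        field_simp
    _ ≤ _ := by gcongr
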